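/- (John–Nirenberg inequality for RBMO(μ).) Let f ∈ RBMO(μ), and let {f_Q}_Q be a collection of real numbers, one per cube, such that sup_Q μ(2Q)^{-1} ∫_Q |f − f_Q| dμ ≤ C·‖f‖_* and |f_Q − f_R| ≤ C·K_{Q,R}·‖f‖_* for all cubes Q ⊂ R. Then for each ρ > 1 there exist positive constants C₅ and C₆, depending only on ρ, C, d, n, C₀ and β_d, such that for every cube Q and every λ > 0: μ{x ∈ Q : |f(x) − f_Q| > λ} ≤ C₅·μ(ρQ)·exp(−C₆·λ/‖f‖_*). -/

import Mathlib

/-!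
Common definitions for formalizing Tolsa, "BMO, H¹, and Calderón–Zygmund
operators for non doubling measures".
-/

open MeasureTheory Metric Set Function
open scoped Classical
open scoped ENNReal NNReal BigOperators

noncomputable section

/-- `ℝ^d` with the Euclidean metric. -/
abbrev Euc (d : ℕ) := EuclideanSpace ℝ (Fin d)

variable {d : ℕ}

/-- The support of a measure: points all of whose balls have positive measure. -/
def measSupp (μ : MeasureTheory.Measure (Euc d)) : Set (Euc d) :=
  {x | ∀ r : ℝ, 0 < r → 0 < μ (Metric.ball x r)}

/-- The growth condition `μ(B(x,r)) ≤ C₀ rⁿ`. -/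
def GrowthBound (μ : MeasureTheory.Measure (Euc d)) (n : ℕ) (C₀ : ℝ) : Prop :=
  ∀ (x : Euc d) (r : ℝ), 0 < r → μ (Metric.ball x r) ≤ ENNReal.ofReal (C₀ * r ^ n)

/-- A (closed, axis-parallel) cube with center in the support of `μ` and positive
side length. -/
structure CubeOf (μ : MeasureTheory.Measure (Euc d)) where
  c : Euc d
  ℓ : ℝ
  ℓ_pos : 0 < ℓ
  c_mem : c ∈ measSupp μ

namespace CubeOf

variable {μ : MeasureTheory.Measure (Euc d)}

/-- The set of points of a cube. -/
def set (Q : CubeOf μ) : Set (Euc d) := {y | ∀ i, |y i - Q.c i| ≤ Q.ℓ / 2}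

/-- The concentric dilation `aQ` of a cube, as a set. -/
def dil (Q : CubeOf μ) (a : ℝ) : Set (Euc d) := {y | ∀ i, |y i - Q.c i| ≤ a * Q.ℓ / 2}

/-- The cube `2^k Q`. -/
def pow2 (Q : CubeOf μ) (k : ℕ) : CubeOf μ :=
  ⟨Q.c, 2 ^ k * Q.ℓ, mul_pos (by positivity) Q.ℓ_pos, Q.c_mem⟩

/-- The cube `6^k Q`. -/
def pow6 (Q : CubeOf μ) (k : ℕ) : CubeOf μ :=
  ⟨Q.c, 6 ^ k * Q.ℓ, mul_pos (by positivity) Q.ℓ_pos, Q.c_mem⟩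

end CubeOf

/-- `(α,β)`-doubling cube: `μ(αQ) ≤ β μ(Q)`. -/
def IsDoubling (μ : MeasureTheory.Measure (Euc d)) (α β : ℝ) (Q : CubeOf μ) : Prop :=
  μ (Q.dil α) ≤ ENNReal.ofReal β * μ Q.set

/-- `N_{Q,R}`: the first integer `k ≥ 1` such that `l(2^k Q) ≥ l(R)`. -/
def NQR {μ : MeasureTheory.Measure (Euc d)} (Q R : CubeOf μ) : ℕ :=
  sInf {k : ℕ | 1 ≤ k ∧ R.ℓ ≤ 2 ^ k * Q.ℓ}

/-- The coefficient `K_{Q,R} = 1 + ∑_{k=1}^{N_{Q,R}} μ(2^k Q)/l(2^k Q)^n`. -/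
def Kcoef {μ : MeasureTheory.Measure (Euc d)} (n : ℕ) (Q R : CubeOf μ) : ℝ :=
  1 + ∑ k ∈ Finset.Icc 1 (NQR Q R), (μ ((Q.pow2 k).set)).toReal / ((2 ^ k * Q.ℓ) ^ n)

/-- The smallest `N ≥ 0` such that `2^N Q` is `(2,βd)`-doubling. -/
def tildeIdx (μ : MeasureTheory.Measure (Euc d)) (βd : ℝ) (Q : CubeOf μ) : ℕ :=
  sInf {N : ℕ | IsDoubling μ 2 βd (Q.pow2 N)}

/-- The cube `Q̃`: the smallest cube `2^N Q`, `N ≥ 0`, which is `(2,βd)`-doubling. -/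
def CubeOf.tilde {μ : MeasureTheory.Measure (Euc d)} (Q : CubeOf μ) (βd : ℝ) : CubeOf μ :=
  Q.pow2 (tildeIdx μ βd Q)

/-- The mean `m_Q f` of `f` over the cube `Q` with respect to `μ`. -/
def mQ (μ : MeasureTheory.Measure (Euc d)) (Q : CubeOf μ) (f : Euc d → ℝ) : ℝ :=
  ⨍ x in Q.set, f x ∂μ

/-- For `μ`-a.e. `x` there are `(2,βd)`-doubling cubes centered at `x` of arbitrarily
small side length. -/
def SmallDoublingAE (μ : MeasureTheory.Measure (Euc d)) (βd : ℝ) : Prop :=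
  ∀ᵐ x ∂μ, ∀ ℓ₀ : ℝ, 0 < ℓ₀ → ∃ Q : CubeOf μ, Q.c = x ∧ Q.ℓ < ℓ₀ ∧ IsDoubling μ 2 βd Q

/-- `C` is an admissible constant in the definition of the `RBMO(μ)` norm of `f`. -/
def RBMOBoundWith (μ : MeasureTheory.Measure (Euc d)) (n : ℕ) (βd : ℝ)
    (f : Euc d → ℝ) (C : ℝ≥0∞) : Prop :=
  (∀ Q : CubeOf μ,
    ∫⁻ x in Q.set, ENNReal.ofReal |f x - mQ μ (Q.tilde βd) f| ∂μ ≤ C * μ (Q.dil 2)) ∧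
  (∀ Q R : CubeOf μ, Q.set ⊆ R.set → IsDoubling μ 2 βd Q → IsDoubling μ 2 βd R →
    ENNReal.ofReal |mQ μ Q f - mQ μ R f| ≤ C * ENNReal.ofReal (Kcoef n Q R))

/-- The `RBMO(μ)` norm `‖f‖_*` (with value `∞` if `f ∉ RBMO(μ)`). -/
def rbmoNorm (μ : MeasureTheory.Measure (Euc d)) (n : ℕ) (βd : ℝ) (f : Euc d → ℝ) : ℝ≥0∞ :=
  sInf {C | RBMOBoundWith μ n βd f C}

/-- The conditions defining `‖f‖_{**,(ρ)}`, for a given family of numbers `fQ`. -/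
def StarStarBoundWith (μ : MeasureTheory.Measure (Euc d)) (n : ℕ) (ρ : ℝ)
    (f : Euc d → ℝ) (fQ : CubeOf μ → ℝ) (C : ℝ≥0∞) : Prop :=
  (∀ Q : CubeOf μ, ∫⁻ x in Q.set, ENNReal.ofReal |f x - fQ Q| ∂μ ≤ C * μ (Q.dil ρ)) ∧
  (∀ Q R : CubeOf μ, Q.set ⊆ R.set →
    ENNReal.ofReal |fQ Q - fQ R| ≤ C * ENNReal.ofReal (Kcoef n Q R))

/-- The norm `‖f‖_{**,(ρ)}`. -/
def starStarNorm (μ : MeasureTheory.Measure (Euc d)) (n : ℕ) (ρ : ℝ) (f : Euc d → ℝ) : ℝ≥0∞ :=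
  sInf {C | ∃ fQ : CubeOf μ → ℝ, StarStarBoundWith μ n ρ f fQ C}

end

noncomputable section

variable {d : ℕ}

/-- The conditions defining the `RBMO^p(μ)` norm. -/
def RBMOpBoundWith (μ : MeasureTheory.Measure (Euc d)) (n : ℕ) (βd : ℝ) (p : ℝ)
    (f : Euc d → ℝ) (C : ℝ≥0∞) : Prop :=
  (∀ Q : CubeOf μ,
    ∫⁻ x in Q.set, ENNReal.ofReal |f x - mQ μ (Q.tilde βd) f| ^ p ∂μ ≤ C ^ p * μ (Q.dil 2)) ∧
  (∀ Q R : CubeOf μ, Q.set ⊆ R.set → IsDoubling μ 2 βd Q → IsDoubling μ 2 βd R →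
    ENNReal.ofReal |mQ μ Q f - mQ μ R f| ≤ C * ENNReal.ofReal (Kcoef n Q R))

/-- The `RBMO^p(μ)` norm `‖f‖_{*,p}`. -/
def rbmoPNorm (μ : MeasureTheory.Measure (Euc d)) (n : ℕ) (βd : ℝ) (p : ℝ)
    (f : Euc d → ℝ) : ℝ≥0∞ :=
  sInf {C | RBMOpBoundWith μ n βd p f C}

/-- Condition (b) of Lemma `fifi` of the paper, with constant `Cb`. -/
def CondB (μ : MeasureTheory.Measure (Euc d)) (n : ℕ) (ρ : ℝ)
    (f : Euc d → ℝ) (Cb : ℝ≥0∞) : Prop :=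
  (∀ Q : CubeOf μ, ∫⁻ x in Q.set, ENNReal.ofReal |f x - mQ μ Q f| ∂μ ≤ Cb * μ (Q.dil ρ)) ∧
  (∀ Q R : CubeOf μ, Q.set ⊆ R.set →
    ENNReal.ofReal |mQ μ Q f - mQ μ R f| ≤
      Cb * ENNReal.ofReal (Kcoef n Q R) * (μ (Q.dil ρ) / μ Q.set + μ (R.dil ρ) / μ R.set))

/-- Condition (c) of Lemma `fifi` of the paper, with constant `Cc`. -/
def CondC (μ : MeasureTheory.Measure (Euc d)) (n : ℕ) (βd : ℝ)
    (f : Euc d → ℝ) (Cc : ℝ≥0∞) : Prop :=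
  (∀ Q : CubeOf μ, IsDoubling μ 2 βd Q →
    ∫⁻ x in Q.set, ENNReal.ofReal |f x - mQ μ Q f| ∂μ ≤ Cc * μ Q.set) ∧
  (∀ Q R : CubeOf μ, Q.set ⊆ R.set → IsDoubling μ 2 βd Q → IsDoubling μ 2 βd R →
    ENNReal.ofReal |mQ μ Q f - mQ μ R f| ≤ Cc * ENNReal.ofReal (Kcoef n Q R))

/-- The conditions defining the norm `‖f‖_∘`, relative to a choice `αQ` of minimizers. -/
def CircBoundWith (μ : MeasureTheory.Measure (Euc d)) (n : ℕ) (βd : ℝ)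
    (f : Euc d → ℝ) (αQ : CubeOf μ → ℝ) (C : ℝ≥0∞) : Prop :=
  (∀ Q : CubeOf μ,
    ∫⁻ x in Q.set, ENNReal.ofReal |f x - αQ (Q.tilde βd)| ∂μ ≤ C * μ (Q.dil 2)) ∧
  (∀ Q R : CubeOf μ, Q.set ⊆ R.set → IsDoubling μ 2 βd Q → IsDoubling μ 2 βd R →
    ENNReal.ofReal |αQ Q - αQ R| ≤ C * ENNReal.ofReal (Kcoef n Q R))

/-- The norm `‖f‖_∘`, relative to a choice `αQ` of minimizers. -/
def circNorm (μ : MeasureTheory.Measure (Euc d)) (n : ℕ) (βd : ℝ)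
    (f : Euc d → ℝ) (αQ : CubeOf μ → ℝ) : ℝ≥0∞ :=
  sInf {C | CircBoundWith μ n βd f αQ C}

/-- An atomic block: a function supported on a cube `R`, with zero integral, of the
form `b = ∑ λⱼ aⱼ` with `aⱼ` supported on cubes `Qⱼ ⊆ R` and
`‖aⱼ‖_{L∞(μ)} ≤ (μ(2Qⱼ) K_{Qⱼ,R})⁻¹`. -/
structure AtomicBlock (μ : MeasureTheory.Measure (Euc d)) (n : ℕ) where
  b : Euc d → ℝ
  R : CubeOf μ
  lam : ℕ → ℝ
  a : ℕ → Euc d → ℝ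
  Qj : ℕ → CubeOf μ
  integrable : MeasureTheory.Integrable b μ
  supp_b : ∀ x ∉ R.set, b x = 0
  int_zero : ∫ x, b x ∂μ = 0
  Qj_sub : ∀ j, (Qj j).set ⊆ R.set
  a_supp : ∀ j, ∀ x ∉ (Qj j).set, a j x = 0
  a_meas : ∀ j, MeasureTheory.AEStronglyMeasurable (a j) μ
  a_bound : ∀ j, MeasureTheory.eLpNorm (a j) ⊤ μ ≤
    (μ ((Qj j).dil 2) * ENNReal.ofReal (Kcoef n (Qj j) R))⁻¹
  lam_summable : Summable fun j => |lam j|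
  b_eq : ∀ᵐ x ∂μ, HasSum (fun j => lam j * a j x) (b x)

/-- `|b|_{H^{1,∞}_atb(μ)} = ∑ⱼ |λⱼ|` for the given decomposition. -/
def AtomicBlock.size {μ : MeasureTheory.Measure (Euc d)} {n : ℕ}
    (B : AtomicBlock μ n) : ℝ :=
  ∑' j, |B.lam j|

/-- The `H^{1,∞}_atb(μ)` norm (with value `∞` outside the space). -/
def hatbNorm (μ : MeasureTheory.Measure (Euc d)) (n : ℕ) (f : Euc d → ℝ) : ℝ≥0∞ :=
  sInf {t : ℝ≥0∞ | ∃ B : ℕ → AtomicBlock μ n,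
    (∀ᵐ x ∂μ, HasSum (fun i => (B i).b x) (f x)) ∧
    t = ∑' i, ENNReal.ofReal ((B i).size)}

/-- A `p`-atomic block: like an atomic block, but with the size condition
`‖aⱼ‖_{L^p(μ)} ≤ μ(2Qⱼ)^{1/p-1} K_{Qⱼ,R}⁻¹`. -/
structure PAtomicBlock (μ : MeasureTheory.Measure (Euc d)) (n : ℕ) (p : ℝ) where
  b : Euc d → ℝ
  R : CubeOf μ
  lam : ℕ → ℝ
  a : ℕ → Euc d → ℝ
  Qj : ℕ → CubeOf μ
  integrable : MeasureTheory.Integrable b μ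
  supp_b : ∀ x ∉ R.set, b x = 0
  int_zero : ∫ x, b x ∂μ = 0
  Qj_sub : ∀ j, (Qj j).set ⊆ R.set
  a_supp : ∀ j, ∀ x ∉ (Qj j).set, a j x = 0
  a_meas : ∀ j, MeasureTheory.AEStronglyMeasurable (a j) μ
  a_bound : ∀ j, MeasureTheory.eLpNorm (a j) (ENNReal.ofReal p) μ ≤
    μ ((Qj j).dil 2) ^ (1 / p - 1) * (ENNReal.ofReal (Kcoef n (Qj j) R))⁻¹
  lam_summable : Summable fun j => |lam j|
  b_eq : ∀ᵐ x ∂μ, HasSum (fun j => lam j * a j x) (b x)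

/-- `|b|_{H^{1,p}_atb(μ)} = ∑ⱼ |λⱼ|` for the given decomposition. -/
def PAtomicBlock.size {μ : MeasureTheory.Measure (Euc d)} {n : ℕ} {p : ℝ}
    (B : PAtomicBlock μ n p) : ℝ :=
  ∑' j, |B.lam j|

/-- The `H^{1,p}_atb(μ)` norm (with value `∞` outside the space). -/
def hatbPNorm (μ : MeasureTheory.Measure (Euc d)) (n : ℕ) (p : ℝ) (f : Euc d → ℝ) : ℝ≥0∞ :=
  sInf {t : ℝ≥0∞ | ∃ B : ℕ → PAtomicBlock μ n p,
    (∀ᵐ x ∂μ, HasSum (fun i => (B i).b x) (f x)) ∧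
    t = ∑' i, ENNReal.ofReal ((B i).size)}

/-- A Calderón–Zygmund kernel of dimension `n`, with constant `Ck` and Hölder
exponent `δ`. -/
def CZKernelBound (n : ℕ) (k : Euc d → Euc d → ℝ) (Ck δ : ℝ) : Prop :=
  (∀ x y : Euc d, x ≠ y → |k x y| ≤ Ck / dist x y ^ (n : ℝ)) ∧
  (∀ x x' y : Euc d, x ≠ y → dist x x' ≤ dist x y / 2 →
    |k x y - k x' y| + |k y x - k y x'| ≤ Ck * dist x x' ^ δ / dist x y ^ ((n : ℝ) + δ))

/-- The truncated operator `T_ε f(x) = ∫_{|x-y|>ε} k(x,y) f(y) dμ(y)`. -/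
def trunc (μ : MeasureTheory.Measure (Euc d)) (k : Euc d → Euc d → ℝ) (ε : ℝ)
    (f : Euc d → ℝ) (x : Euc d) : ℝ :=
  ∫ y in {y | ε < dist x y}, k x y * f y ∂μ

/-- The non-centered doubling maximal operator `N`. -/
def Nop (μ : MeasureTheory.Measure (Euc d)) (βd : ℝ) (f : Euc d → ℝ) (x : Euc d) : ℝ≥0∞ :=
  ⨆ (Q : CubeOf μ) (_ : x ∈ Q.set) (_ : IsDoubling μ 2 βd Q),
    (∫⁻ y in Q.set, ENNReal.ofReal |f y| ∂μ) / μ Q.set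

/-- The sharp maximal operator `M^♯`. -/
def Msharp (μ : MeasureTheory.Measure (Euc d)) (n : ℕ) (βd : ℝ)
    (f : Euc d → ℝ) (x : Euc d) : ℝ≥0∞ :=
  (⨆ (Q : CubeOf μ) (_ : x ∈ Q.set),
    (∫⁻ y in Q.set, ENNReal.ofReal |f y - mQ μ (Q.tilde βd) f| ∂μ) / μ (Q.dil (3/2))) +
  ⨆ (Q : CubeOf μ) (R : CubeOf μ) (_ : x ∈ Q.set) (_ : Q.set ⊆ R.set)
      (_ : IsDoubling μ 2 βd Q) (_ : IsDoubling μ 2 βd R),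
    ENNReal.ofReal (|mQ μ Q f - mQ μ R f| / Kcoef n Q R)

/-- The weight functions `w_i = χ_{Q_i} / ∑_k χ_{Q_k}` of the Calderón–Zygmund
decomposition. -/
def czWeight {μ : MeasureTheory.Measure (Euc d)} (J : Finset ℕ) (Q : ℕ → CubeOf μ)
    (i : ℕ) (x : Euc d) : ℝ :=
  Set.indicator (Q i).set
    (fun y => (((J.filter fun kk => y ∈ (Q kk).set).card : ℝ))⁻¹) x

/-- The smallest `(6,6^{n+1})`-doubling cube of the form `6^k Q`, `k ≥ 1`. -/
def smallest6Doubling (μ : MeasureTheory.Measure (Euc d)) (n : ℕ) (Q : CubeOf μ) : CubeOf μ :=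
  Q.pow6 (sInf {k : ℕ | 1 ≤ k ∧ IsDoubling μ 6 (6 ^ (n + 1)) (Q.pow6 k)})

end

/-!
Normalize the constant in the hypotheses to `1`, and fix a large `B`. By Lebesgue differentiation,
almost every `x ∈ Q` with `|f x - f_Q| > B` is the center of a small doubling cube on which the mean
of `|f - f_Q|` exceeds `B`; take such a cube `P` of almost maximal size. Either the first doubling
cube `2ⁱP` is still small, and then its mean is at most `B` by maximality, or all the `2ⁱP` up to
the size of `Q` are non-doubling. In both cases the densities `μ(2ᵏP) / l(2ᵏP)ⁿ` grow geometrically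
along the non-doubling scales, so that `K_{P,2ⁱP}` is bounded and hence so is `|f_P - f_Q|`, by a
constant `A`. Besicovitch's theorem splits a cover by such cubes into boundedly many disjoint
families, and for `B` large their total mass, even after dilation, is at most half of that of a
dilate of `Q`. As `|f - f_Q| > a + A` forces `|f - f_P| > a` on `P`, the mass of
`{|f - f_Q| > k A}` decays like `2⁻ᵏ` by induction on `k`.
-/

section Preliminaries

theorem sum_Icc_le_div_of_le_mul_succ {a : ℕ → ℝ} {θ : ℝ} (ha : ∀ k, 0 ≤ a k) (hθ₀ : 0 ≤ θ)
    (hθ₁ : θ < 1) {j : ℕ} (hj : ∀ k ∈ Finset.Icc 1 j, a k ≤ θ * a (k + 1)) :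
    ∑ k ∈ Finset.Icc 1 (j + 1), a k ≤ a (j + 1) / (1 - θ) := by
  have hpos : 0 < 1 - θ := sub_pos.2 hθ₁
  induction j with
  | zero =>
    simp only [zero_add, Finset.Icc_self, Finset.sum_singleton]
    exact le_div_self (ha 1) hpos (sub_le_self 1 hθ₀)
  | succ j ih =>
    have hlast : a (j + 1) ≤ θ * a (j + 2) := hj (j + 1) (by simp)
    have hinit := ih fun k hk => hj k (Finset.Icc_subset_Icc_right j.le_succ hk)
    rw [Finset.sum_Icc_succ_top (by lia)]
    rw [le_div_iff₀ hpos] at hinit ⊢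
    linarith

theorem half_pow_floor_le_two_mul_exp {x : ℝ} :
    (1 / 2 : ℝ) ^ ⌊x⌋₊ ≤ 2 * Real.exp (-(Real.log 2 * x)) := by
  have hexp : (1 / 2 : ℝ) ^ ⌊x⌋₊ = 2 * Real.exp (-(Real.log 2 * (⌊x⌋₊ + 1))) := by
    rw [Real.exp_neg, mul_comm (Real.log 2), ← Nat.cast_succ, ← Real.log_pow,
      Real.exp_log (by positivity), pow_succ, one_div, inv_pow]
    field_simp
  rw [hexp]
  have := Real.log_pos one_lt_two
  gcongr
  exact (Nat.lt_floor_add_one x).le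

theorem exists_mem_forall_mem_lt_two_mul {ι : Type*} {S : Set ι} {φ : ι → ℝ} (hS : S.Nonempty)
    (hbdd : BddAbove (φ '' S)) (hpos : ∀ i ∈ S, 0 < φ i) : ∃ i ∈ S, ∀ j ∈ S, φ j < 2 * φ i := by
  have hsup : 0 < sSup (φ '' S) := by
    obtain ⟨i, hi⟩ := hS
    exact (hpos i hi).trans_le (le_csSup hbdd ⟨i, hi, rfl⟩)
  obtain ⟨_, ⟨i, hi, rfl⟩, hlt⟩ := exists_lt_of_lt_csSup (hS.image φ) (half_lt_self hsup)
  refine ⟨i, hi, fun j hj => ?_⟩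
  linarith [le_csSup hbdd ⟨j, hj, rfl⟩]

theorem setLIntegral_abs_sub_le {α : Type*} [MeasurableSpace α] {μ : Measure α} (f : α → ℝ)
    (S : Set α) (a b : ℝ) :
    ∫⁻ x in S, ENNReal.ofReal |f x - a| ∂μ ≤
      ∫⁻ x in S, ENNReal.ofReal |f x - b| ∂μ + ENNReal.ofReal |b - a| * μ S := by
  calc ∫⁻ x in S, ENNReal.ofReal |f x - a| ∂μ
      ≤ ∫⁻ x in S, (ENNReal.ofReal |f x - b| + ENNReal.ofReal |b - a|) ∂μ := by
        refine lintegral_mono fun x => ?_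
        rw [← ENNReal.ofReal_add (abs_nonneg _) (abs_nonneg _)]
        exact ENNReal.ofReal_le_ofReal (abs_sub_le _ _ _)
    _ = ∫⁻ x in S, ENNReal.ofReal |f x - b| ∂μ + ENNReal.ofReal |b - a| * μ S := by
        rw [lintegral_add_right _ measurable_const, setLIntegral_const]

theorem ofReal_abs_sub_mul_measure_le {α : Type*} [MeasurableSpace α] {μ : Measure α} {f : α → ℝ}
    (hf : AEMeasurable f μ) (S : Set α) (a b : ℝ) :
    ENNReal.ofReal |a - b| * μ S ≤
      ∫⁻ x in S, ENNReal.ofReal |f x - a| ∂μ + ∫⁻ x in S, ENNReal.ofReal |f x - b| ∂μ := by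
  rw [← setLIntegral_const, ← lintegral_add_left' (hf.sub_const a).abs.ennreal_ofReal.restrict]
  refine lintegral_mono fun x => ?_
  rw [← ENNReal.ofReal_add (abs_nonneg _) (abs_nonneg _), abs_sub_comm (f x) a]
  exact ENNReal.ofReal_le_ofReal (abs_sub_le _ _ _)

theorem exists_coveringNumber_le (E : Type*) [NormedAddCommGroup E] [NormedSpace ℝ E]
    [ProperSpace E] {ε : ℝ≥0} (hε : 0 < ε) :
    ∃ M : ℕ, ∀ (c : E) (r : ℝ≥0) (S : Set E), S ⊆ closedBall c r →
      coveringNumber (2 * (r * ε)) S ≤ M := by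
  obtain ⟨t, -, ht, hcov⟩ := (isCompact_closedBall (0 : E) 1).finite_cover_balls
    (NNReal.coe_pos.2 hε)
  refine ⟨t.ncard, fun c r S hS => ?_⟩
  have hunit : IsCover ε (closedBall (0 : E) 1) t :=
    isCover_iff_subset_iUnion_closedBall.2 <|
      hcov.trans (iUnion₂_mono fun _ _ => ball_subset_closedBall)
  have hlip : LipschitzWith r fun y : E => c + (r : ℝ) • y := by
    refine LipschitzWith.of_dist_le_mul fun x y => ?_
    rw [dist_add_left, dist_smul₀, Real.norm_of_nonneg r.coe_nonneg]
  have himage : IsCover (r * ε) S ((fun y : E => c + (r : ℝ) • y) '' t) := by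
    refine (hunit.image_lipschitz hlip).anti (hS.trans ?_)
    rw [← affinity_unitClosedBall r.coe_nonneg, ← image_smul, ← image_vadd, image_image]
    rfl
  calc coveringNumber (2 * (r * ε)) S
      ≤ externalCoveringNumber (r * ε) S := coveringNumber_two_mul_le_externalCoveringNumber _ _
    _ ≤ ((fun y : E => c + (r : ℝ) • y) '' t).encard := himage.externalCoveringNumber_le_encard
    _ ≤ t.encard := encard_image_le _ _
    _ = t.ncard := ht.cast_ncard_eq.symm

theorem ae_tendsto_lintegral_preimage_closedBall_div {X Y : Type*} [TopologicalSpace X]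
    [SecondCountableTopology X] [MeasurableSpace X] [BorelSpace X] [MetricSpace Y]
    [SecondCountableTopology Y] [MeasurableSpace Y] [BorelSpace Y] [HasBesicovitchCovering Y]
    (e : X ≃ₜ Y) (μ : Measure X) [IsLocallyFiniteMeasure μ] {g : X → ℝ≥0∞}
    (hg : AEMeasurable g μ) (hfin : ∫⁻ x, g x ∂μ ≠ ⊤) :
    ∀ᵐ x ∂μ, Filter.Tendsto
      (fun r => (∫⁻ y in e ⁻¹' closedBall (e x) r, g y ∂μ) / μ (e ⁻¹' closedBall (e x) r))
      (nhdsWithin 0 (Ioi 0)) (nhds (g x)) := by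
  let e' : X ≃ᵐ Y := e.toMeasurableEquiv
  have : IsLocallyFiniteMeasure (μ.map e') := by
    refine ⟨fun y => ?_⟩
    obtain ⟨U, hyU, hU, hμU⟩ := μ.exists_isOpen_measure_lt_top (e.symm y)
    refine ⟨e.symm ⁻¹' U, (hU.preimage e.symm.continuous).mem_nhds hyU, ?_⟩
    rwa [e'.map_apply, ← preimage_comp, show e.symm ∘ e' = id from e.symm_comp_self, preimage_id]
  have hg' : AEMeasurable (g ∘ e'.symm) (μ.map e') := by
    rw [e'.measurableEmbedding.aemeasurable_map_iff]
    simpa [Function.comp_def] using hg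
  have hfin' : ∫⁻ y, (g ∘ e'.symm) y ∂(μ.map e') ≠ ⊤ := by
    rw [lintegral_map_equiv]
    simpa using hfin
  have hdiff := VitaliFamily.ae_tendsto_lintegral_div
    (Besicovitch.vitaliFamily (μ.map e')) hg' hfin'
  filter_upwards [ae_of_ae_map e'.measurable.aemeasurable hdiff] with x hx
  have hlim := hx.comp (Besicovitch.tendsto_filterAt (μ.map e') (e' x))
  simp only [Function.comp_def, e'.restrict_map, lintegral_map_equiv, e'.map_apply,
    e'.symm_apply_apply] at hlim
  exact hlim

end Preliminaries

section Cubes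

variable {d : ℕ} {μ : Measure (Euc d)}

namespace CubeOf

theorem dil_one (Q : CubeOf μ) : Q.dil 1 = Q.set := by
  simp only [dil, set, one_mul]

theorem dil_mono (Q : CubeOf μ) {a b : ℝ} (hab : a ≤ b) : Q.dil a ⊆ Q.dil b := by
  intro y hy i
  have hℓ := Q.ℓ_pos
  exact (hy i).trans (by gcongr)

theorem set_subset_dil (Q : CubeOf μ) {a : ℝ} (ha : 1 ≤ a) : Q.set ⊆ Q.dil a :=
  Q.dil_one ▸ Q.dil_mono ha

theorem pow2_set (Q : CubeOf μ) (k : ℕ) : (Q.pow2 k).set = Q.dil (2 ^ k) := rfl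

theorem pow2_dil_two (Q : CubeOf μ) (k : ℕ) : (Q.pow2 k).dil 2 = (Q.pow2 (k + 1)).set := by
  simp only [dil, set, pow2, pow_succ', mul_assoc]

theorem set_subset_pow2_set (Q : CubeOf μ) (k : ℕ) : Q.set ⊆ (Q.pow2 k).set :=
  Q.set_subset_dil (one_le_pow₀ one_le_two)

theorem dil_subset_dil {P Q : CubeOf μ} {a b r : ℝ} (hc : P.c ∈ Q.dil a)
    (hℓ : a * Q.ℓ + r * P.ℓ ≤ b * Q.ℓ) : P.dil r ⊆ Q.dil b := by
  intro y hy i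
  have := abs_sub_le (y i) (P.c i) (Q.c i)
  have := hy i
  have := hc i
  linarith

theorem dil_eq_preimage (Q : CubeOf μ) {a : ℝ} (ha : 0 ≤ a) :
    Q.dil a = PiLp.homeomorph 2 (fun _ : Fin d => ℝ) ⁻¹'
      closedBall (PiLp.homeomorph 2 (fun _ : Fin d => ℝ) Q.c) (a * Q.ℓ / 2) := by
  ext y
  have hℓ := Q.ℓ_pos
  rw [mem_preimage, mem_closedBall, dist_pi_le_iff (by positivity)]
  rfl

theorem set_eq_preimage (Q : CubeOf μ) :
    Q.set = PiLp.homeomorph 2 (fun _ : Fin d => ℝ) ⁻¹'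
      closedBall (PiLp.homeomorph 2 (fun _ : Fin d => ℝ) Q.c) (Q.ℓ / 2) := by
  rw [← Q.dil_one, Q.dil_eq_preimage zero_le_one, one_mul]

theorem isCompact_set (Q : CubeOf μ) : IsCompact Q.set := by
  rw [set_eq_preimage, (PiLp.homeomorph 2 _).isCompact_preimage]
  exact isCompact_closedBall _ _

theorem measurableSet_set (Q : CubeOf μ) : MeasurableSet Q.set :=
  Q.isCompact_set.measurableSet

theorem measure_set_ne_top [IsLocallyFiniteMeasure μ] (Q : CubeOf μ) : μ Q.set ≠ ⊤ :=
  Q.isCompact_set.measure_ne_top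

theorem measure_set_ne_zero (Q : CubeOf μ) : μ Q.set ≠ 0 := by
  have hsub : ball Q.c (Q.ℓ / 2) ⊆ Q.set := fun y hy i =>
    (PiLp.norm_apply_le (y - Q.c) i).trans (mem_ball_iff_norm.1 hy).le
  exact ((Q.c_mem _ (half_pos Q.ℓ_pos)).trans_le (measure_mono hsub)).ne'

theorem set_subset_ball (Q : CubeOf μ) : Q.set ⊆ ball Q.c ((d + 1) * Q.ℓ) := by
  intro y hy
  have hℓ := Q.ℓ_pos
  rw [mem_ball, EuclideanSpace.dist_eq, Real.sqrt_lt' (by positivity)]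
  calc ∑ i, dist (y i) (Q.c i) ^ 2 ≤ ∑ _i : Fin d, (Q.ℓ / 2) ^ 2 :=
        Finset.sum_le_sum fun i _ => pow_le_pow_left₀ dist_nonneg (hy i) 2
    _ = d * (Q.ℓ / 2) ^ 2 := by simp
    _ < ((d + 1) * Q.ℓ) ^ 2 := by
        have : 0 < Q.ℓ ^ 2 := by positivity
        have : (0 : ℝ) ≤ d := d.cast_nonneg
        nlinarith

/-- The `n`-dimensional density `μ(Q) / l(Q)^n`, the quantity summed in `K_{Q,R}`. -/
noncomputable def density (n : ℕ) (Q : CubeOf μ) : ℝ := (μ Q.set).toReal / Q.ℓ ^ n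

theorem density_nonneg (n : ℕ) (Q : CubeOf μ) : 0 ≤ Q.density n :=
  div_nonneg ENNReal.toReal_nonneg (pow_nonneg Q.ℓ_pos.le n)

theorem density_pow2_le_of_not_isDoubling [IsLocallyFiniteMeasure μ] {n : ℕ} {β : ℝ} (hβ : 0 < β)
    {Q : CubeOf μ} {k : ℕ} (hQ : ¬ IsDoubling μ 2 β (Q.pow2 k)) :
    (Q.pow2 k).density n ≤ 2 ^ n / β * (Q.pow2 (k + 1)).density n := by
  rw [IsDoubling, pow2_dil_two, not_le] at hQ
  have hmass : β * (μ (Q.pow2 k).set).toReal ≤ (μ (Q.pow2 (k + 1)).set).toReal := by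
    simpa [ENNReal.toReal_mul, hβ.le] using ENNReal.toReal_mono (measure_set_ne_top _) hQ.le
  have hℓ : (Q.pow2 (k + 1)).ℓ ^ n = 2 ^ n * (Q.pow2 k).ℓ ^ n := by
    simp only [pow2]
    ring
  have hpos := (Q.pow2 k).ℓ_pos
  rw [density, density, hℓ, div_mul_div_comm, div_le_div_iff₀ (by positivity) (by positivity)]
  calc (μ (Q.pow2 k).set).toReal * (β * (2 ^ n * (Q.pow2 k).ℓ ^ n))
      = β * (μ (Q.pow2 k).set).toReal * (2 ^ n * (Q.pow2 k).ℓ ^ n) := by ring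
    _ ≤ (μ (Q.pow2 (k + 1)).set).toReal * (2 ^ n * (Q.pow2 k).ℓ ^ n) := by gcongr
    _ = 2 ^ n * (μ (Q.pow2 (k + 1)).set).toReal * (Q.pow2 k).ℓ ^ n := by ring

end CubeOf

theorem ae_mem_measSupp (μ : Measure (Euc d)) : ∀ᵐ x ∂μ, x ∈ measSupp μ := by
  filter_upwards [Measure.support_mem_ae] with x hx r hr
  exact (Measure.mem_support_iff_forall x).1 hx _ (ball_mem_nhds x hr)

theorem GrowthBound.isLocallyFiniteMeasure {n : ℕ} {C₀ : ℝ} (hμ : GrowthBound μ n C₀) :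
    IsLocallyFiniteMeasure μ :=
  ⟨fun x => ⟨ball x 1, ball_mem_nhds x one_pos, (hμ x 1 one_pos).trans_lt ENNReal.ofReal_lt_top⟩⟩

theorem GrowthBound.density_le {n : ℕ} {C₀ : ℝ} (hC₀ : 0 ≤ C₀) (hμ : GrowthBound μ n C₀)
    (Q : CubeOf μ) : Q.density n ≤ C₀ * (d + 1) ^ n := by
  have hℓ := Q.ℓ_pos
  rw [CubeOf.density, div_le_iff₀ (by positivity), mul_assoc, ← mul_pow]
  exact ENNReal.toReal_le_of_le_ofReal (by positivity) <|
    (measure_mono Q.set_subset_ball).trans (hμ Q.c _ (by positivity))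

end Cubes

section CubeCoefficients

variable {d n : ℕ} {μ : Measure (Euc d)} {κ β : ℝ}

theorem Kcoef_eq_one_add_sum_density (Q R : CubeOf μ) :
    Kcoef n Q R = 1 + ∑ k ∈ Finset.Icc 1 (NQR Q R), (Q.pow2 k).density n := rfl

theorem Kcoef_nonneg (Q R : CubeOf μ) : 0 ≤ Kcoef n Q R := by
  rw [Kcoef_eq_one_add_sum_density]
  exact add_nonneg zero_le_one (Finset.sum_nonneg fun k _ => (Q.pow2 k).density_nonneg n)

theorem Kcoef_le_one_add_sum_density {Q R : CubeOf μ} {m : ℕ} (hm : 1 ≤ m)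
    (hℓ : R.ℓ ≤ 2 ^ m * Q.ℓ) :
    Kcoef n Q R ≤ 1 + ∑ k ∈ Finset.Icc 1 m, (Q.pow2 k).density n := by
  rw [Kcoef_eq_one_add_sum_density]
  gcongr
  · exact fun k _ _ => (Q.pow2 k).density_nonneg n
  · exact Nat.sInf_le ⟨hm, hℓ⟩

theorem Kcoef_le_one_add_mul (hκ : ∀ Q : CubeOf μ, Q.density n ≤ κ) {Q R : CubeOf μ} {m : ℕ}
    (hm : 1 ≤ m) (hℓ : R.ℓ ≤ 2 ^ m * Q.ℓ) : Kcoef n Q R ≤ 1 + m * κ := by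
  refine (Kcoef_le_one_add_sum_density hm hℓ).trans (add_le_add_right ?_ 1)
  simpa using Finset.sum_le_card_nsmul (Finset.Icc 1 m) _ κ fun k _ => hκ (Q.pow2 k)

theorem Kcoef_pow2_le_of_not_isDoubling [IsLocallyFiniteMeasure μ]
    (hκ : ∀ Q : CubeOf μ, Q.density n ≤ κ) (hβ : 2 ^ n < β) {P : CubeOf μ} {j : ℕ}
    (hP : ∀ i ∈ Finset.Icc 1 j, ¬ IsDoubling μ 2 β (P.pow2 i)) (m : ℕ) :
    Kcoef n P (P.pow2 (j + 1 + m)) ≤ 1 + κ / (1 - 2 ^ n / β) + m * κ := by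
  have hβ₀ : 0 < β := lt_trans (by positivity) hβ
  have hθ : 2 ^ n / β < 1 := (div_lt_one hβ₀).2 hβ
  have hnondoubling : ∑ k ∈ Finset.Icc 1 (j + 1), (P.pow2 k).density n ≤ κ / (1 - 2 ^ n / β) :=
    (sum_Icc_le_div_of_le_mul_succ (fun k => (P.pow2 k).density_nonneg n) (by positivity) hθ
      fun k hk => CubeOf.density_pow2_le_of_not_isDoubling hβ₀ (hP k hk)).trans <|
      div_le_div_of_nonneg_right (hκ _) (sub_nonneg.2 hθ.le)
  have htail : ∑ k ∈ Finset.Ioc (j + 1) (j + 1 + m), (P.pow2 k).density n ≤ m * κ := by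
    simpa using Finset.sum_le_card_nsmul (Finset.Ioc (j + 1) (j + 1 + m)) _ κ
      fun k _ => hκ (P.pow2 k)
  have hIcc (b : ℕ) : Finset.Icc 1 b = Finset.Ioc 0 b := Finset.Icc_add_one_left_eq_Ioc 0 b
  calc Kcoef n P (P.pow2 (j + 1 + m))
      ≤ 1 + ∑ k ∈ Finset.Icc 1 (j + 1 + m), (P.pow2 k).density n :=
        Kcoef_le_one_add_sum_density (by lia) le_rfl
    _ = 1 + (∑ k ∈ Finset.Icc 1 (j + 1), (P.pow2 k).density n +
          ∑ k ∈ Finset.Ioc (j + 1) (j + 1 + m), (P.pow2 k).density n) := by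
        rw [hIcc, hIcc, Finset.sum_Ioc_consecutive _ (Nat.zero_le _) (Nat.le_add_right _ _)]
    _ ≤ 1 + κ / (1 - 2 ^ n / β) + m * κ := by linarith

end CubeCoefficients

theorem CubeOf.exists_finset_dil_inter_measSupp_subset (d : ℕ) {a δ : ℝ} (ha : 0 < a)
    (hδ : 0 < δ) : ∃ M : ℕ, ∀ {μ : Measure (Euc d)} (Q : CubeOf μ), ∃ 𝒬 : Finset (CubeOf μ),
      𝒬.card ≤ M ∧ (∀ P ∈ 𝒬, P.c ∈ Q.dil a ∧ P.ℓ = δ * Q.ℓ) ∧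
      Q.dil a ∩ measSupp μ ⊆ ⋃ P ∈ 𝒬, P.set := by
  have hε : 0 < δ / (2 * a) := by positivity
  obtain ⟨M, hM⟩ := exists_coveringNumber_le (Fin d → ℝ) (ε := ⟨δ / (2 * a), hε.le⟩) hε
  refine ⟨M, fun {μ} Q => ?_⟩
  have hℓ := Q.ℓ_pos
  let e := PiLp.homeomorph 2 fun _ : Fin d => ℝ
  have hr : 0 ≤ a * Q.ℓ / 2 := by positivity
  have hcard := hM (e Q.c) ⟨a * Q.ℓ / 2, hr⟩ (e '' (Q.dil a ∩ measSupp μ)) <| by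
    rw [image_subset_iff]
    exact inter_subset_left.trans (Q.dil_eq_preimage ha.le).subset
  obtain ⟨t, htS, htfin, htcov, htcard⟩ :=
    exists_set_encard_eq_coveringNumber (ne_top_of_le_ne_top (ENat.natCast_ne_top M) hcard)
  let 𝒬 : Set (CubeOf μ) := {P | e P.c ∈ t ∧ P.ℓ = δ * Q.ℓ}
  have hinj : InjOn (fun P : CubeOf μ => e P.c) 𝒬 := by
    rintro ⟨c, ℓ, _, _⟩ ⟨_, rfl : ℓ = _⟩ ⟨c', ℓ', _, _⟩ ⟨_, rfl : ℓ' = _⟩ hcc'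
    obtain rfl : c = c' := e.injective hcc'
    rfl
  have hfin : 𝒬.Finite := htfin.of_injOn (fun P hP => hP.1) hinj
  refine ⟨hfin.toFinset, ?_, fun P hP => ?_, fun x hx => ?_⟩
  · rw [← Nat.cast_le (α := ℕ∞), ← encard_coe_eq_coe_finsetCard, hfin.coe_toFinset]
    exact (encard_le_encard_of_injOn (fun P hP => hP.1) hinj).trans (htcard.le.trans hcard)
  · obtain ⟨hPt, hPℓ⟩ := hfin.mem_toFinset.1 hP
    obtain ⟨y, hy, hyP⟩ := htS hPt
    exact ⟨e.injective hyP ▸ hy.1, hPℓ⟩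
  · obtain ⟨z, hzt, hz⟩ := mem_iUnion₂.1 <|
      isCover_iff_subset_iUnion_closedBall.1 htcov (mem_image_of_mem e hx)
    obtain ⟨y, hy, rfl⟩ := htS hzt
    refine mem_iUnion₂.2 ⟨⟨y, δ * Q.ℓ, by positivity, hy.2⟩, hfin.mem_toFinset.2 ⟨hzt, rfl⟩, ?_⟩
    rw [CubeOf.set_eq_preimage]
    refine closedBall_subset_closedBall (le_of_eq ?_) hz
    change 2 * (a * Q.ℓ / 2 * (δ / (2 * a))) = δ * Q.ℓ / 2
    field_simp

section Oscillation

variable {d n : ℕ} {μ : Measure (Euc d)} {κ β : ℝ} {f : Euc d → ℝ} {fQ : CubeOf μ → ℝ}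

namespace StarStarBoundWith

theorem abs_sub_le (h : StarStarBoundWith μ n 2 f fQ 1) {Q R : CubeOf μ} (hQR : Q.set ⊆ R.set) :
    |fQ Q - fQ R| ≤ Kcoef n Q R := by
  simpa [ENNReal.ofReal_le_ofReal_iff (Kcoef_nonneg Q R)] using h.2 Q R hQR

theorem abs_sub_le_one_add_mul (h : StarStarBoundWith μ n 2 f fQ 1)
    (hκ : ∀ Q : CubeOf μ, Q.density n ≤ κ) {Q R : CubeOf μ} (hQR : Q.set ⊆ R.set) {m : ℕ}
    (hm : 1 ≤ m) (hℓ : R.ℓ ≤ 2 ^ m * Q.ℓ) : |fQ Q - fQ R| ≤ 1 + m * κ :=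
  (h.abs_sub_le hQR).trans (Kcoef_le_one_add_mul hκ hm hℓ)

theorem abs_sub_le_of_isDoubling [IsLocallyFiniteMeasure μ]
    (h : StarStarBoundWith μ n 2 f fQ 1) (hf : AEMeasurable f μ) (hβ : 0 ≤ β) {R : CubeOf μ}
    (hR : IsDoubling μ 2 β R) {a B : ℝ} (hB : 0 ≤ B)
    (ha : ∫⁻ x in R.set, ENNReal.ofReal |f x - a| ∂μ ≤ ENNReal.ofReal B * μ R.set) :
    |fQ R - a| ≤ β + B := by
  rw [← ENNReal.ofReal_le_ofReal_iff (by positivity), ← ENNReal.mul_le_mul_iff_left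
    R.measure_set_ne_zero R.measure_set_ne_top]
  calc ENNReal.ofReal |fQ R - a| * μ R.set
      ≤ ∫⁻ x in R.set, ENNReal.ofReal |f x - fQ R| ∂μ +
          ∫⁻ x in R.set, ENNReal.ofReal |f x - a| ∂μ :=
        ofReal_abs_sub_mul_measure_le hf R.set _ _
    _ ≤ ENNReal.ofReal β * μ R.set + ENNReal.ofReal B * μ R.set := by
        gcongr
        exact (h.1 R).trans (by rwa [one_mul])
    _ = ENNReal.ofReal (β + B) * μ R.set := by rw [ENNReal.ofReal_add hβ hB, add_mul]

theorem abs_sub_le_of_mem_dil (h : StarStarBoundWith μ n 2 f fQ 1)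
    (hκ : ∀ Q : CubeOf μ, Q.density n ≤ κ) {P Q : CubeOf μ} {s : ℕ}
    (hc : P.c ∈ Q.dil (1 + (1 / 2) ^ s)) (hℓ : P.ℓ = (1 / 2) ^ s * Q.ℓ) :
    |fQ P - fQ Q| ≤ 2 + (s + 4) * κ := by
  have hQ := Q.ℓ_pos
  have hs : (1 / 2 : ℝ) ^ s * Q.ℓ ≤ Q.ℓ :=
    mul_le_of_le_one_left hQ.le (pow_le_one₀ (by norm_num) (by norm_num))
  have hPR : P.set ⊆ (Q.pow2 2).set := by
    rw [← P.dil_one, Q.pow2_set]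
    exact CubeOf.dil_subset_dil hc (by linarith)
  have hPℓ : (Q.pow2 2).ℓ ≤ 2 ^ (s + 2) * P.ℓ := by
    rw [hℓ, pow_add, one_div, inv_pow]
    exact le_of_eq (by simp only [CubeOf.pow2]; field_simp)
  have hP := h.abs_sub_le_one_add_mul hκ hPR (by lia) hPℓ
  have hQ' := h.abs_sub_le_one_add_mul hκ (Q.set_subset_pow2_set 2) one_le_two le_rfl
  have := _root_.abs_sub_le (fQ P) (fQ (Q.pow2 2)) (fQ Q)
  rw [abs_sub_comm (fQ (Q.pow2 2))] at this
  push_cast at hP hQ'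
  linarith

theorem setLIntegral_le_of_mem_dil (h : StarStarBoundWith μ n 2 f fQ 1)
    (hκ : ∀ Q : CubeOf μ, Q.density n ≤ κ) {P Q : CubeOf μ} {s : ℕ}
    (hc : P.c ∈ Q.dil (1 + (1 / 2) ^ s)) (hℓ : P.ℓ = (1 / 2) ^ s * Q.ℓ) :
    ∫⁻ x in P.set, ENNReal.ofReal |f x - fQ Q| ∂μ ≤
      (1 + ENNReal.ofReal (2 + (s + 4) * κ)) * μ (Q.dil (1 + 3 * (1 / 2) ^ s)) := by
  have hdil : P.dil 2 ⊆ Q.dil (1 + 3 * (1 / 2) ^ s) :=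
    CubeOf.dil_subset_dil hc (by rw [hℓ]; linarith)
  calc ∫⁻ x in P.set, ENNReal.ofReal |f x - fQ Q| ∂μ
      ≤ ∫⁻ x in P.set, ENNReal.ofReal |f x - fQ P| ∂μ + ENNReal.ofReal |fQ P - fQ Q| * μ P.set :=
        setLIntegral_abs_sub_le f P.set _ _
    _ ≤ 1 * μ (P.dil 2) + ENNReal.ofReal (2 + (s + 4) * κ) * μ (P.dil 2) := by
        gcongr
        · exact h.1 P
        · exact h.abs_sub_le_of_mem_dil hκ hc hℓ
        · exact P.set_subset_dil one_le_two
    _ ≤ (1 + ENNReal.ofReal (2 + (s + 4) * κ)) * μ (Q.dil (1 + 3 * (1 / 2) ^ s)) := by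
        rw [← add_mul]
        gcongr

/-- Passing to a finite cover by cubes of side `2⁻ˢ l(Q)` lowers the dilation factor `2` on the
right-hand side of the oscillation bound to a factor as close to `1` as desired. -/
theorem exists_setLIntegral_dil_le (d n : ℕ) (κ : ℝ) (s : ℕ) :
    ∃ M : ℝ≥0, ∀ {μ : Measure (Euc d)} {f : Euc d → ℝ} {fQ : CubeOf μ → ℝ},
      (∀ Q : CubeOf μ, Q.density n ≤ κ) → StarStarBoundWith μ n 2 f fQ 1 → ∀ Q : CubeOf μ,
        ∫⁻ x in Q.dil (1 + (1 / 2) ^ s), ENNReal.ofReal |f x - fQ Q| ∂μ ≤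
          M * μ (Q.dil (1 + 3 * (1 / 2) ^ s)) := by
  obtain ⟨N, hN⟩ := CubeOf.exists_finset_dil_inter_measSupp_subset d
    (a := 1 + (1 / 2) ^ s) (δ := (1 / 2) ^ s) (by positivity) (by positivity)
  refine ⟨N * (1 + (2 + (s + 4) * κ).toNNReal), fun {μ f fQ} hκ h Q => ?_⟩
  obtain ⟨𝒬, hcard, h𝒬, hcov⟩ := hN Q
  calc ∫⁻ x in Q.dil (1 + (1 / 2) ^ s), ENNReal.ofReal |f x - fQ Q| ∂μ
      = ∫⁻ x in Q.dil (1 + (1 / 2) ^ s) ∩ measSupp μ, ENNReal.ofReal |f x - fQ Q| ∂μ :=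
        (setLIntegral_congr (inter_ae_eq_left_of_ae_eq_univ
          (Filter.eventuallyEq_univ.2 (ae_mem_measSupp μ)))).symm
    _ ≤ ∫⁻ x in ⋃ P ∈ 𝒬, P.set, ENNReal.ofReal |f x - fQ Q| ∂μ := lintegral_mono_set hcov
    _ ≤ ∑ P ∈ 𝒬, ∫⁻ x in P.set, ENNReal.ofReal |f x - fQ Q| ∂μ := by
        refine (lintegral_mono' (Measure.restrict_biUnion_le 𝒬.countable_toSet) le_rfl).trans_eq ?_
        rw [lintegral_sum_measure]
        exact 𝒬.tsum_subtype fun P => ∫⁻ x in P.set, ENNReal.ofReal |f x - fQ Q| ∂μ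
    _ ≤ 𝒬.card • ((1 + ENNReal.ofReal (2 + (s + 4) * κ)) * μ (Q.dil (1 + 3 * (1 / 2) ^ s))) :=
        Finset.sum_le_card_nsmul _ _ _ fun P hP =>
          h.setLIntegral_le_of_mem_dil hκ (h𝒬 P hP).1 (h𝒬 P hP).2
    _ ≤ _ := by
        rw [nsmul_eq_mul, ← mul_assoc]
        push_cast
        gcongr
        rfl

end StarStarBoundWith

end Oscillation

section StoppingCubes

variable {d n s : ℕ} {μ : Measure (Euc d)} {κ β B : ℝ} {f : Euc d → ℝ} {fQ : CubeOf μ → ℝ}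

/-- `P` is a doubling cube on which the mean of `|f - a|` exceeds `B`. -/
def HasLargeOsc (β : ℝ) (f : Euc d → ℝ) (a B : ℝ) (P : CubeOf μ) : Prop :=
  IsDoubling μ 2 β P ∧ ENNReal.ofReal B * μ P.set < ∫⁻ x in P.set, ENNReal.ofReal |f x - a| ∂μ

/-- The bound on `|f_P - f_Q|` for the cubes `P` produced by the stopping-time argument in `Q`. -/
noncomputable def stoppingJump (n s : ℕ) (κ β B : ℝ) : ℝ :=
  B + β + 2 + κ / (1 - 2 ^ n / β) + (s + 5) * κ

/-- The cubes selected by the stopping-time argument in `Q`; they are centered in `Q`, and their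
side lengths are at most `2⁻ˢ l(Q)`. -/
structure IsStoppingCube (s : ℕ) (β B A : ℝ) (f : Euc d → ℝ) (fQ : CubeOf μ → ℝ)
    (Q P : CubeOf μ) : Prop where
  center_mem : P.c ∈ Q.set
  side_le : P.ℓ ≤ (1 / 2) ^ s * Q.ℓ
  hasLargeOsc : HasLargeOsc β f (fQ Q) B P
  abs_sub_le : |fQ P - fQ Q| ≤ A

theorem le_stoppingJump (hκ : 0 ≤ κ) (hβ : 2 ^ n < β) : B ≤ stoppingJump n s κ β B := by
  have hβ₀ : 0 < β := lt_trans (by positivity) hβ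
  have hθ : 0 ≤ 1 - 2 ^ n / β := sub_nonneg.2 ((div_lt_one hβ₀).2 hβ).le
  have : 0 ≤ β + 2 + κ / (1 - 2 ^ n / β) + (s + 5) * κ := by positivity
  rw [stoppingJump]
  linarith

namespace StarStarBoundWith

theorem setLIntegral_abs_sub_ne_top [IsLocallyFiniteMeasure μ]
    (h : StarStarBoundWith μ n 2 f fQ 1) (R : CubeOf μ) (a : ℝ) :
    ∫⁻ x in R.set, ENNReal.ofReal |f x - a| ∂μ ≠ ⊤ := by
  have hR : ∫⁻ x in R.set, ENNReal.ofReal |f x - fQ R| ∂μ ≤ μ (R.pow2 1).set := by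
    simpa [CubeOf.pow2_set] using h.1 R
  refine ne_top_of_le_ne_top ?_ (setLIntegral_abs_sub_le f R.set a (fQ R))
  exact ENNReal.add_ne_top.2 ⟨ne_top_of_le_ne_top (CubeOf.measure_set_ne_top _) hR,
    ENNReal.mul_ne_top ENNReal.ofReal_ne_top R.measure_set_ne_top⟩

theorem ae_exists_hasLargeOsc [IsLocallyFiniteMeasure μ] (h : StarStarBoundWith μ n 2 f fQ 1)
    (hf : AEMeasurable f μ) (hsd : SmallDoublingAE μ β) (hB : 0 ≤ B) (Q : CubeOf μ) (a : ℝ)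
    {ℓ₀ : ℝ} (hℓ₀ : 0 < ℓ₀) :
    ∀ᵐ x ∂μ, x ∈ Q.set → B < |f x - a| →
      ∃ P : CubeOf μ, P.c = x ∧ P.ℓ ≤ ℓ₀ ∧ HasLargeOsc β f a B P := by
  let g : Euc d → ℝ≥0∞ := Q.set.indicator fun x => ENNReal.ofReal |f x - a|
  have hg : AEMeasurable g μ := (hf.sub_const a).abs.ennreal_ofReal.indicator Q.measurableSet_set
  have hfin : ∫⁻ x, g x ∂μ ≠ ⊤ := by
    rw [lintegral_indicator Q.measurableSet_set]
    exact h.setLIntegral_abs_sub_ne_top Q a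
  filter_upwards [hsd, ae_tendsto_lintegral_preimage_closedBall_div
    (PiLp.homeomorph 2 fun _ : Fin d => ℝ) μ hg hfin] with x hdoubling hlim hxQ hxB
  have hBg : ENNReal.ofReal B < g x := by
    rwa [show g x = _ from indicator_of_mem hxQ _, ENNReal.ofReal_lt_ofReal_iff_of_nonneg hB]
  obtain ⟨ε, hε, hlarge⟩ := mem_nhdsGT_iff_exists_Ioo_subset.1 (hlim.eventually (lt_mem_nhds hBg))
  obtain ⟨P, rfl, hPℓ, hP⟩ := hdoubling (min ε ℓ₀) (lt_min hε hℓ₀)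
  refine ⟨P, rfl, (hPℓ.trans_le (min_le_right _ _)).le, hP, ?_⟩
  have hPε : P.ℓ / 2 < ε := (half_lt_self P.ℓ_pos).trans (hPℓ.trans_le (min_le_left _ _))
  have hmean : ENNReal.ofReal B < (∫⁻ y in P.set, g y ∂μ) / μ P.set := by
    rw [P.set_eq_preimage]
    exact hlarge ⟨half_pos P.ℓ_pos, hPε⟩
  rw [ENNReal.lt_div_iff_mul_lt (.inl P.measure_set_ne_zero) (.inl P.measure_set_ne_top)] at hmean
  exact hmean.trans_le (lintegral_mono fun y => indicator_le_self _ _ y)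

theorem abs_sub_pow2_le [IsLocallyFiniteMeasure μ] (h : StarStarBoundWith μ n 2 f fQ 1)
    (hκ : ∀ Q : CubeOf μ, Q.density n ≤ κ) (hβ : 2 ^ n < β) {P : CubeOf μ} {j : ℕ}
    (hP : ∀ i ∈ Finset.Icc 1 j, ¬ IsDoubling μ 2 β (P.pow2 i)) (m : ℕ) :
    |fQ P - fQ (P.pow2 (j + 1 + m))| ≤ 1 + κ / (1 - 2 ^ n / β) + m * κ :=
  (h.abs_sub_le (P.set_subset_pow2_set _)).trans (Kcoef_pow2_le_of_not_isDoubling hκ hβ hP m)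

/-- On the first doubling cube `2ⁱP` the mean of `|f - a|` is small, so `f_{2ⁱP}` is close to `a`,
and all the cubes between `P` and `2ⁱP` are non-doubling. -/
theorem abs_sub_le_of_exists_isDoubling_pow2 [IsLocallyFiniteMeasure μ]
    (h : StarStarBoundWith μ n 2 f fQ 1) (hf : AEMeasurable f μ)
    (hκ : ∀ Q : CubeOf μ, Q.density n ≤ κ) (hβ : 2 ^ n < β) (hB : 0 ≤ B) {P : CubeOf μ}
    {a ℓ₀ : ℝ} (hex : ∃ i, 1 ≤ i ∧ (P.pow2 i).ℓ ≤ ℓ₀ ∧ IsDoubling μ 2 β (P.pow2 i))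
    (hosc : ∀ i, 1 ≤ i → (P.pow2 i).ℓ ≤ ℓ₀ → ¬ HasLargeOsc β f a B (P.pow2 i)) :
    |fQ P - a| ≤ 1 + κ / (1 - 2 ^ n / β) + β + B := by
  have hβ₀ : 0 ≤ β := (lt_trans (by positivity) hβ).le
  have hP := P.ℓ_pos
  obtain ⟨hi, hiℓ, hidbl⟩ := Nat.find_spec hex
  have hfirst (k : ℕ) (hk : 1 ≤ k) (hki : k < Nat.find hex) : ¬ IsDoubling μ 2 β (P.pow2 k) := by
    refine fun hkdbl => Nat.find_min hex hki ⟨hk, le_trans ?_ hiℓ, hkdbl⟩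
    simp only [CubeOf.pow2]
    gcongr
    · exact one_le_two
    · exact hki.le
  obtain ⟨j, hj⟩ := Nat.exists_eq_add_of_le' hi
  rw [hj] at hi hiℓ hidbl hfirst
  have hjump := h.abs_sub_pow2_le hκ hβ
    (fun k hk => hfirst k (Finset.mem_Icc.1 hk).1 (Nat.lt_succ_of_le (Finset.mem_Icc.1 hk).2)) 0
  have hclose := h.abs_sub_le_of_isDoubling hf hβ₀ hidbl hB
    (not_lt.1 fun hlt => hosc _ hi hiℓ ⟨hidbl, hlt⟩)
  have := _root_.abs_sub_le (fQ P) (fQ (P.pow2 (j + 1))) a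
  simp only [add_zero, Nat.cast_zero, zero_mul] at hjump
  linarith

theorem abs_sub_le_of_forall_not_isDoubling_pow2 [IsLocallyFiniteMeasure μ]
    (h : StarStarBoundWith μ n 2 f fQ 1) (hκ : ∀ Q : CubeOf μ, Q.density n ≤ κ) (hβ : 2 ^ n < β)
    {P Q : CubeOf μ} (hc : P.c ∈ Q.set) (hℓ : P.ℓ ≤ (1 / 2) ^ s * Q.ℓ)
    (hP : ∀ i, 1 ≤ i → (P.pow2 i).ℓ ≤ (1 / 2) ^ s * Q.ℓ → ¬ IsDoubling μ 2 β (P.pow2 i)) :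
    |fQ P - fQ Q| ≤ 2 + κ / (1 - 2 ^ n / β) + (s + 5) * κ := by
  have hPℓ := P.ℓ_pos
  obtain ⟨j, hj, hj'⟩ := exists_nat_pow_near ((one_le_div hPℓ).2 hℓ) one_lt_two
  rw [le_div_iff₀ hPℓ] at hj
  rw [div_lt_iff₀ hPℓ, one_div, inv_pow, inv_mul_lt_iff₀ (by positivity)] at hj'
  let R := P.pow2 (j + 1 + (s + 2))
  have hRℓ : R.ℓ = 4 * (2 ^ s * (2 ^ (j + 1) * P.ℓ)) := by
    simp only [R, CubeOf.pow2]
    ring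
  have hRQ : R.ℓ ≤ 2 ^ 3 * Q.ℓ := by
    rw [one_div, inv_pow, le_inv_mul_iff₀ (by positivity)] at hj
    rw [hRℓ, pow_succ]
    linarith
  have hQR : Q.set ⊆ R.set := by
    intro y hy i
    have := _root_.abs_sub_le (y i) (Q.c i) (P.c i)
    have := hy i
    have := abs_sub_comm (Q.c i) (P.c i) ▸ hc i
    change |y i - P.c i| ≤ R.ℓ / 2
    linarith
  have hPR := h.abs_sub_pow2_le hκ hβ (j := j) (fun i hi => hP i (Finset.mem_Icc.1 hi).1 <| by
    refine le_trans ?_ hj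
    simp only [CubeOf.pow2]
    gcongr
    · exact one_le_two
    · exact (Finset.mem_Icc.1 hi).2) (s + 2)
  have hQR' := h.abs_sub_le_one_add_mul hκ hQR (by lia) hRQ
  have := _root_.abs_sub_le (fQ P) (fQ R) (fQ Q)
  rw [abs_sub_comm (fQ R)] at this
  push_cast at hPR hQR'
  linarith

theorem exists_isStoppingCube [IsLocallyFiniteMeasure μ] (h : StarStarBoundWith μ n 2 f fQ 1)
    (hf : AEMeasurable f μ) (hκ : ∀ Q : CubeOf μ, Q.density n ≤ κ) (hβ : 2 ^ n < β) (hB : 0 ≤ B)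
    {P₀ Q : CubeOf μ} (hc : P₀.c ∈ Q.set) (hℓ : P₀.ℓ ≤ (1 / 2) ^ s * Q.ℓ)
    (hP₀ : HasLargeOsc β f (fQ Q) B P₀) :
    ∃ P : CubeOf μ, P.c = P₀.c ∧ IsStoppingCube s β B (stoppingJump n s κ β B) f fQ Q P := by
  obtain ⟨P, ⟨hPc, hPℓ, hPosc⟩, hmax⟩ := exists_mem_forall_mem_lt_two_mul
    (S := {P : CubeOf μ | P.c = P₀.c ∧ P.ℓ ≤ (1 / 2) ^ s * Q.ℓ ∧ HasLargeOsc β f (fQ Q) B P})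
    (φ := CubeOf.ℓ) ⟨P₀, rfl, hℓ, hP₀⟩ ⟨(1 / 2) ^ s * Q.ℓ, by rintro _ ⟨P, hP, rfl⟩; exact hP.2.1⟩
    fun P _ => P.ℓ_pos
  rw [← hPc] at hc
  refine ⟨P, hPc, hc, hPℓ, hPosc, ?_⟩
  have hosc (i : ℕ) (hi : 1 ≤ i) (hiℓ : (P.pow2 i).ℓ ≤ (1 / 2) ^ s * Q.ℓ) :
      ¬ HasLargeOsc β f (fQ Q) B (P.pow2 i) := by
    refine fun hlarge => (hmax (P.pow2 i) ⟨hPc, hiℓ, hlarge⟩).not_ge ?_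
    have hP := P.ℓ_pos
    simp only [CubeOf.pow2]
    gcongr
    exact le_self_pow₀ one_le_two (by lia)
  have hβ₀ : 0 < β := lt_trans (by positivity) hβ
  have hκ₀ : 0 ≤ κ := (P.density_nonneg n).trans (hκ P)
  have hpos : 0 ≤ (s + 5) * κ := by positivity
  rw [stoppingJump]
  by_cases hex : ∃ i, 1 ≤ i ∧ (P.pow2 i).ℓ ≤ (1 / 2) ^ s * Q.ℓ ∧ IsDoubling μ 2 β (P.pow2 i)
  · linarith [h.abs_sub_le_of_exists_isDoubling_pow2 hf hκ hβ hB hex hosc]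
  · push Not at hex
    linarith [h.abs_sub_le_of_forall_not_isDoubling_pow2 hκ hβ hc hPℓ hex]

end StarStarBoundWith

end StoppingCubes

section Covering

variable {d n s N : ℕ} {μ : Measure (Euc d)} {κ β B A : ℝ} {M : ℝ≥0} {f : Euc d → ℝ}
  {fQ : CubeOf μ → ℝ}

namespace CubeOf

theorem exists_disjoint_covering_families (𝒬 : Set (CubeOf μ)) {L : ℝ} (hL : ∀ P ∈ 𝒬, P.ℓ ≤ L) :
    ∃ 𝒮 : Fin (Besicovitch.multiplicity (Fin d → ℝ)) → Set (CubeOf μ),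
      (∀ i, 𝒮 i ⊆ 𝒬 ∧ (𝒮 i).Countable ∧ (𝒮 i).PairwiseDisjoint CubeOf.set) ∧
      ∀ P ∈ 𝒬, ∃ i, ∃ R ∈ 𝒮 i, P.c ∈ R.set := by
  let q : Besicovitch.BallPackage 𝒬 (Fin d → ℝ) :=
    { c := fun P => P.1.c.ofLp
      r := fun P => P.1.ℓ / 2
      rpos := fun P => half_pos P.1.ℓ_pos
      r_bound := L / 2
      r_le := fun P => div_le_div_of_nonneg_right (hL P P.2) two_pos.le }
  obtain ⟨t, hdisj, hcover⟩ := Besicovitch.exist_disjoint_covering_families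
    (Besicovitch.one_lt_goodτ _) (Besicovitch.isEmpty_satelliteConfig_multiplicity _) q
  refine ⟨fun i => (↑) '' t i, fun i => ⟨by simp, .image ?_ _, ?_⟩, fun P hP => ?_⟩
  · exact (hdisj i).countable_of_nonempty_interior fun P _ =>
      (nonempty_ball.2 (q.rpos P)).mono ball_subset_interior_closedBall
  · rintro _ ⟨P, hP, rfl⟩ _ ⟨R, hR, rfl⟩ hPR
    rw [Function.onFun, set_eq_preimage, set_eq_preimage]
    exact (hdisj i hP hR fun h => hPR (congrArg _ h)).preimage _
  · obtain ⟨i, R, hR, hPR⟩ := by simpa only [mem_iUnion] using hcover (mem_range_self ⟨P, hP⟩)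
    refine ⟨i, R, mem_image_of_mem _ hR, ?_⟩
    rw [set_eq_preimage]
    exact ball_subset_closedBall hPR

/-- The set of points of `Q` at which `f` differs from `b` by more than `a`. -/
def oscSet (Q : CubeOf μ) (f : Euc d → ℝ) (b a : ℝ) : Set (Euc d) :=
  {x | x ∈ Q.set ∧ a < |f x - b|}

end CubeOf

theorem ofReal_mul_tsum_measure_le_of_hasLargeOsc {a : ℝ} {𝒮 : Set (CubeOf μ)}
    (hcount : 𝒮.Countable) (hdisj : 𝒮.PairwiseDisjoint CubeOf.set)
    (hosc : ∀ P ∈ 𝒮, HasLargeOsc β f a B P) {X : Set (Euc d)} (hX : ∀ P ∈ 𝒮, P.set ⊆ X) :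
    ENNReal.ofReal B * ∑' P : 𝒮, μ P.1.set ≤ ∫⁻ x in X, ENNReal.ofReal |f x - a| ∂μ := by
  have : Countable 𝒮 := hcount.to_subtype
  calc ENNReal.ofReal B * ∑' P : 𝒮, μ P.1.set
      = ∑' P : 𝒮, ENNReal.ofReal B * μ P.1.set := ENNReal.tsum_mul_left.symm
    _ ≤ ∑' P : 𝒮, ∫⁻ x in P.1.set, ENNReal.ofReal |f x - a| ∂μ :=
        ENNReal.tsum_le_tsum fun P => (hosc P P.2).2.le
    _ = ∫⁻ x in ⋃ P ∈ 𝒮, P.set, ENNReal.ofReal |f x - a| ∂μ :=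
        (lintegral_biUnion hcount (fun P _ => P.measurableSet_set) hdisj _).symm
    _ ≤ ∫⁻ x in X, ENNReal.ofReal |f x - a| ∂μ := lintegral_mono_set (iUnion₂_subset hX)

/-- The disjoint families which, by Besicovitch's theorem, can be extracted from the stopping cubes
in `Q` so as to cover the set where `|f - f_Q| > B`. -/
structure IsStoppingCover (s : ℕ) (β B A : ℝ) (f : Euc d → ℝ) (fQ : CubeOf μ → ℝ) (Q : CubeOf μ)
    {N : ℕ} (𝒮 : Fin N → Set (CubeOf μ)) : Prop where
  countable (i) : (𝒮 i).Countable
  pairwiseDisjoint (i) : (𝒮 i).PairwiseDisjoint CubeOf.set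
  isStoppingCube {i} {P} : P ∈ 𝒮 i → IsStoppingCube s β B A f fQ Q P
  ae_exists_mem : ∀ᵐ x ∂μ, x ∈ Q.oscSet f (fQ Q) B → ∃ i, ∃ P ∈ 𝒮 i, x ∈ P.set

theorem StarStarBoundWith.exists_isStoppingCover [IsLocallyFiniteMeasure μ]
    (h : StarStarBoundWith μ n 2 f fQ 1) (hf : AEMeasurable f μ)
    (hκ : ∀ Q : CubeOf μ, Q.density n ≤ κ) (hβ : 2 ^ n < β) (hsd : SmallDoublingAE μ β)
    (hB : 0 ≤ B) (Q : CubeOf μ) :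
    ∃ 𝒮 : Fin (Besicovitch.multiplicity (Fin d → ℝ)) → Set (CubeOf μ),
      IsStoppingCover s β B (stoppingJump n s κ β B) f fQ Q 𝒮 := by
  obtain ⟨𝒮, h𝒮, hcover⟩ := CubeOf.exists_disjoint_covering_families
    {P | IsStoppingCube s β B (stoppingJump n s κ β B) f fQ Q P} fun P hP => hP.side_le
  refine ⟨𝒮, fun i => (h𝒮 i).2.1, fun i => (h𝒮 i).2.2, fun {i P} hP => (h𝒮 i).1 hP, ?_⟩
  have hℓ : 0 < (1 / 2) ^ s * Q.ℓ := mul_pos (by positivity) Q.ℓ_pos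
  filter_upwards [h.ae_exists_hasLargeOsc hf hsd hB Q (fQ Q) hℓ] with x hx hxQ
  obtain ⟨P₀, rfl, hℓ, hosc⟩ := hx hxQ.1 hxQ.2
  obtain ⟨P, hPc, hP⟩ := h.exists_isStoppingCube hf hκ hβ hB hxQ.1 hℓ hosc
  exact hPc ▸ hcover P hP

theorem IsStoppingCube.mem_oscSet {Q P : CubeOf μ} (hP : IsStoppingCube s β B A f fQ Q P)
    {x : Euc d} (hxP : x ∈ P.set) {a : ℝ} (hx : a + A < |f x - fQ Q|) :
    x ∈ P.oscSet f (fQ P) a := by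
  have := _root_.abs_sub_le (f x) (fQ P) (fQ Q)
  exact ⟨hxP, by linarith [hP.abs_sub_le]⟩

theorem IsStoppingCube.set_subset_dil {Q P : CubeOf μ} (hP : IsStoppingCube s β B A f fQ Q P) :
    P.set ⊆ Q.dil (1 + (1 / 2) ^ s) := by
  rw [← P.dil_one]
  exact CubeOf.dil_subset_dil (Q.dil_one.symm ▸ hP.center_mem) (by linarith [hP.side_le])

namespace IsStoppingCover

variable {Q : CubeOf μ} {𝒮 : Fin N → Set (CubeOf μ)}

theorem ofReal_mul_tsum_measure_le (h𝒮 : IsStoppingCover s β B A f fQ Q 𝒮) (i) :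
    ENNReal.ofReal B * ∑' P : 𝒮 i, μ P.1.set ≤
      ∫⁻ x in Q.dil (1 + (1 / 2) ^ s), ENNReal.ofReal |f x - fQ Q| ∂μ :=
  ofReal_mul_tsum_measure_le_of_hasLargeOsc (h𝒮.countable i) (h𝒮.pairwiseDisjoint i)
    (fun _ hP => (h𝒮.isStoppingCube hP).hasLargeOsc)
    fun _ hP => (h𝒮.isStoppingCube hP).set_subset_dil

theorem sum_tsum_measure_le (h𝒮 : IsStoppingCover s β B A f fQ Q 𝒮) {m : ℝ≥0∞} (hB : 0 < B)
    (hMB : 2 * (N * β * M) ≤ B)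
    (hM : ∫⁻ x in Q.dil (1 + (1 / 2) ^ s), ENNReal.ofReal |f x - fQ Q| ∂μ ≤ M * m) :
    ∑ i, ENNReal.ofReal β * ∑' P : 𝒮 i, μ P.1.set ≤ 2⁻¹ * m := by
  have hMB' : 2 * (N * ENNReal.ofReal β * M) ≤ ENNReal.ofReal B := by
    refine le_trans (le_of_eq ?_) (ENNReal.ofReal_le_ofReal hMB)
    rw [ENNReal.ofReal_mul two_pos.le, ENNReal.ofReal_mul' M.coe_nonneg,
      ENNReal.ofReal_mul N.cast_nonneg, ENNReal.ofReal_natCast, ENNReal.ofReal_coe_nnreal,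
      ENNReal.ofReal_ofNat]
  rw [← ENNReal.mul_le_mul_iff_right (ENNReal.ofReal_pos.2 hB).ne' ENNReal.ofReal_ne_top]
  calc ENNReal.ofReal B * ∑ i, ENNReal.ofReal β * ∑' P : 𝒮 i, μ P.1.set
      = ∑ i, ENNReal.ofReal β * (ENNReal.ofReal B * ∑' P : 𝒮 i, μ P.1.set) := by
        rw [Finset.mul_sum]
        exact Finset.sum_congr rfl fun i _ => mul_left_comm _ _ _
    _ ≤ ∑ _i : Fin N, ENNReal.ofReal β * (M * m) := Finset.sum_le_sum fun i _ =>
        mul_le_mul_right ((h𝒮.ofReal_mul_tsum_measure_le i).trans hM) _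
    _ = 2 * (N * ENNReal.ofReal β * M) * (2⁻¹ * m) := by
        rw [Finset.sum_const, Finset.card_univ, Fintype.card_fin, nsmul_eq_mul, mul_mul_mul_comm,
          ENNReal.mul_inv_cancel two_ne_zero ENNReal.ofNat_ne_top, one_mul, mul_assoc, mul_assoc]
    _ ≤ ENNReal.ofReal B * (2⁻¹ * m) := mul_le_mul_left hMB' _

theorem measure_oscSet_le (h𝒮 : IsStoppingCover s β B A f fQ Q 𝒮) (hBA : B ≤ A) {a : ℝ}
    (ha : 0 ≤ a) :
    μ (Q.oscSet f (fQ Q) (a + A)) ≤ ∑ i, ∑' P : 𝒮 i, μ (P.1.oscSet f (fQ P) a) := by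
  have hcover : Q.oscSet f (fQ Q) (a + A) ≤ᵐ[μ] ⋃ i, ⋃ P ∈ 𝒮 i, P.oscSet f (fQ P) a := by
    filter_upwards [h𝒮.ae_exists_mem] with x hx hxQ
    obtain ⟨i, P, hP, hxP⟩ := hx ⟨hxQ.1, by linarith [hxQ.2]⟩
    exact mem_iUnion.2 ⟨i, mem_iUnion₂.2 ⟨P, hP, (h𝒮.isStoppingCube hP).mem_oscSet hxP hxQ.2⟩⟩
  calc μ (Q.oscSet f (fQ Q) (a + A))
      ≤ μ (⋃ i, ⋃ P ∈ 𝒮 i, P.oscSet f (fQ P) a) := measure_mono_ae hcover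
    _ ≤ ∑ i, μ (⋃ P ∈ 𝒮 i, P.oscSet f (fQ P) a) := measure_iUnion_fintype_le _ _
    _ ≤ ∑ i, ∑' P : 𝒮 i, μ (P.1.oscSet f (fQ P) a) :=
        Finset.sum_le_sum fun i _ => measure_biUnion_le μ (h𝒮.countable i) _

end IsStoppingCover

end Covering

section Iteration

variable {d n s N : ℕ} {μ : Measure (Euc d)} {κ β B A : ℝ} {M : ℝ≥0} {f : Euc d → ℝ}
  {fQ : CubeOf μ → ℝ}

theorem IsStoppingCover.measure_oscSet_add_le {Q : CubeOf μ} {𝒮 : Fin N → Set (CubeOf μ)}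
    (h𝒮 : IsStoppingCover s β B A f fQ Q 𝒮) (hB : 0 < B) (hBA : B ≤ A)
    (hMB : 2 * (N * β * M) ≤ B) {δ : ℝ} (hδ : 1 + δ ≤ 2)
    (hM : ∫⁻ x in Q.dil (1 + (1 / 2) ^ s), ENNReal.ofReal |f x - fQ Q| ∂μ ≤ M * μ (Q.dil (1 + δ)))
    {a : ℝ} (ha : 0 ≤ a) {ε : ℝ≥0∞}
    (hε : ∀ P : CubeOf μ, μ (P.oscSet f (fQ P) a) ≤ ε * μ (P.dil (1 + δ))) :
    μ (Q.oscSet f (fQ Q) (a + A)) ≤ ε * 2⁻¹ * μ (Q.dil (1 + δ)) := by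
  have hP {i} (P : 𝒮 i) : μ (P.1.oscSet f (fQ P) a) ≤ ε * (ENNReal.ofReal β * μ P.1.set) :=
    (hε P).trans <| mul_le_mul_right ((measure_mono (P.1.dil_mono hδ)).trans
      (h𝒮.isStoppingCube P.2).hasLargeOsc.1) _
  calc μ (Q.oscSet f (fQ Q) (a + A))
      ≤ ∑ i, ∑' P : 𝒮 i, μ (P.1.oscSet f (fQ P) a) := h𝒮.measure_oscSet_le hBA ha
    _ ≤ ∑ i, ∑' P : 𝒮 i, ε * (ENNReal.ofReal β * μ P.1.set) :=
        Finset.sum_le_sum fun i _ => ENNReal.tsum_le_tsum hP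
    _ = ε * ∑ i, ENNReal.ofReal β * ∑' P : 𝒮 i, μ P.1.set := by
        simp only [ENNReal.tsum_mul_left, Finset.mul_sum]
    _ ≤ ε * (2⁻¹ * μ (Q.dil (1 + δ))) := mul_le_mul_right (h𝒮.sum_tsum_measure_le hB hMB hM) _
    _ = ε * 2⁻¹ * μ (Q.dil (1 + δ)) := (mul_assoc _ _ _).symm

namespace StarStarBoundWith

theorem measure_oscSet_nat_mul_le [IsLocallyFiniteMeasure μ] (h : StarStarBoundWith μ n 2 f fQ 1)
    (hf : AEMeasurable f μ) (hκ₀ : 0 ≤ κ) (hκ : ∀ Q : CubeOf μ, Q.density n ≤ κ)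
    (hβ : 2 ^ n < β) (hsd : SmallDoublingAE μ β) {δ : ℝ} (hδ₀ : 0 ≤ δ) (hδ : 1 + δ ≤ 2)
    (hM : ∀ Q : CubeOf μ, ∫⁻ x in Q.dil (1 + (1 / 2) ^ s), ENNReal.ofReal |f x - fQ Q| ∂μ ≤
      M * μ (Q.dil (1 + δ)))
    (hB : 0 < B) (hMB : 2 * (Besicovitch.multiplicity (Fin d → ℝ) * β * M) ≤ B) (k : ℕ) :
    ∀ Q : CubeOf μ, μ (Q.oscSet f (fQ Q) (k * stoppingJump n s κ β B)) ≤
      2⁻¹ ^ k * μ (Q.dil (1 + δ)) := by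
  have hBA : B ≤ stoppingJump n s κ β B := le_stoppingJump hκ₀ hβ
  induction k with
  | zero =>
    intro Q
    rw [pow_zero, one_mul]
    exact measure_mono fun x hx => Q.set_subset_dil (le_add_of_nonneg_right hδ₀) hx.1
  | succ k ih =>
    intro Q
    obtain ⟨𝒮, h𝒮⟩ := h.exists_isStoppingCover hf hκ hβ hsd hB.le (s := s) Q
    rw [Nat.cast_succ, add_one_mul, pow_succ]
    exact h𝒮.measure_oscSet_add_le hB hBA hMB hδ (hM Q)
      (mul_nonneg k.cast_nonneg (hB.le.trans hBA)) ih

theorem exists_measure_oscSet_nat_mul_le (d n : ℕ) {κ β ρ : ℝ} (hκ₀ : 0 ≤ κ) (hβ : 2 ^ n < β)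
    (hρ : 1 < ρ) :
    ∃ A : ℝ, 0 < A ∧ ∀ {μ : Measure (Euc d)} [IsLocallyFiniteMeasure μ] {f : Euc d → ℝ}
      {fQ : CubeOf μ → ℝ}, (∀ Q : CubeOf μ, Q.density n ≤ κ) → SmallDoublingAE μ β →
      AEMeasurable f μ → StarStarBoundWith μ n 2 f fQ 1 → ∀ (Q : CubeOf μ) (k : ℕ),
        μ (Q.oscSet f (fQ Q) (k * A)) ≤ 2⁻¹ ^ k * μ (Q.dil ρ) := by
  obtain ⟨s, hs⟩ := exists_pow_lt_of_lt_one (y := (1 / 2 : ℝ)) (x := min (ρ - 1) 1 / 3)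
    (div_pos (lt_min (sub_pos.2 hρ) one_pos) three_pos) one_half_lt_one
  have hsρ : 3 * (1 / 2) ^ s ≤ ρ - 1 := by linarith [min_le_left (ρ - 1) 1]
  have hs₁ : 3 * (1 / 2 : ℝ) ^ s ≤ 1 := by linarith [min_le_right (ρ - 1) 1]
  obtain ⟨M, hM⟩ := exists_setLIntegral_dil_le d n κ s
  have hβ₀ : 0 < β := lt_trans (by positivity) hβ
  let B : ℝ := 2 * (Besicovitch.multiplicity (Fin d → ℝ) * β * M) + 1
  have hB : 0 < B := by positivity
  refine ⟨stoppingJump n s κ β B, hB.trans_le (le_stoppingJump hκ₀ hβ), ?_⟩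
  intro μ _ f fQ hκ hsd hf h Q k
  refine (h.measure_oscSet_nat_mul_le hf hκ₀ hκ hβ hsd (by positivity) (by linarith) (hM hκ h) hB
    (le_add_of_nonneg_right zero_le_one) k Q).trans ?_
  gcongr
  exact Q.dil_mono (by linarith)

theorem div_const {c : ℝ} (hc : 0 < c) (h : StarStarBoundWith μ n 2 f fQ (ENNReal.ofReal c)) :
    StarStarBoundWith μ n 2 (fun x => f x / c) (fun Q => fQ Q / c) 1 := by
  have hdiv (x y : ℝ) :
      ENNReal.ofReal |x / c - y / c| = (ENNReal.ofReal c)⁻¹ * ENNReal.ofReal |x - y| := by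
    rw [← sub_div, abs_div, abs_of_pos hc, ENNReal.ofReal_div_of_pos hc, ENNReal.div_eq_inv_mul]
  have hc₀ := (ENNReal.ofReal_pos.2 hc).ne'
  refine ⟨fun Q => ?_, fun Q R hQR => ?_⟩
  · simp only [hdiv]
    rw [lintegral_const_mul' _ _ (ENNReal.inv_ne_top.2 hc₀), one_mul,
      ENNReal.inv_mul_le_iff hc₀ ENNReal.ofReal_ne_top]
    exact h.1 Q
  · rw [hdiv, one_mul, ENNReal.inv_mul_le_iff hc₀ ENNReal.ofReal_ne_top]
    exact h.2 Q R hQR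

theorem exists_measure_oscSet_le_exp (d n : ℕ) {κ β ρ : ℝ} (hκ₀ : 0 ≤ κ) (hβ : 2 ^ n < β)
    (hρ : 1 < ρ) :
    ∃ A : ℝ, 0 < A ∧ ∀ {μ : Measure (Euc d)} [IsLocallyFiniteMeasure μ] {f : Euc d → ℝ}
      {fQ : CubeOf μ → ℝ} {c : ℝ}, (∀ Q : CubeOf μ, Q.density n ≤ κ) → SmallDoublingAE μ β →
      AEMeasurable f μ → 0 < c → StarStarBoundWith μ n 2 f fQ (ENNReal.ofReal c) →
      ∀ (Q : CubeOf μ) {a : ℝ}, 0 ≤ a →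
        μ (Q.oscSet f (fQ Q) a) ≤
          ENNReal.ofReal (2 * Real.exp (-(A * (a / c)))) * μ (Q.dil ρ) := by
  obtain ⟨A, hA, hdecay⟩ := exists_measure_oscSet_nat_mul_le d n hκ₀ hβ hρ
  refine ⟨Real.log 2 / A, div_pos (Real.log_pos one_lt_two) hA, ?_⟩
  intro μ _ f fQ c hκ hsd hf hc h Q a ha
  set k := ⌊a / c / A⌋₊
  have hkA : k * A ≤ a / c := (le_div_iff₀ hA).1 (Nat.floor_le (by positivity))
  have hsub : Q.oscSet f (fQ Q) a ⊆ Q.oscSet (fun x => f x / c) (fQ Q / c) (k * A) := by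
    refine fun x hx => ⟨hx.1, hkA.trans_lt ?_⟩
    rw [← sub_div, abs_div, abs_of_pos hc]
    exact div_lt_div_of_pos_right hx.2 hc
  have hexp : (2⁻¹ : ℝ≥0∞) ^ k ≤ ENNReal.ofReal (2 * Real.exp (-(Real.log 2 / A * (a / c)))) := by
    rw [← ENNReal.ofReal_ofNat 2, ← ENNReal.ofReal_inv_of_pos two_pos,
      ← ENNReal.ofReal_pow (by positivity), div_mul_eq_mul_div, mul_div_assoc, ← one_div]
    exact ENNReal.ofReal_le_ofReal half_pow_floor_le_two_mul_exp
  calc μ (Q.oscSet f (fQ Q) a) ≤ 2⁻¹ ^ k * μ (Q.dil ρ) :=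
        (measure_mono hsub).trans (hdecay hκ hsd (hf.div_const c) (h.div_const hc) Q k)
    _ ≤ _ := mul_le_mul_left hexp _

end StarStarBoundWith

end Iteration

theorem statement5_general (d n : ℕ) (C₀ βd ρ CC : ℝ) (hC₀ : 0 ≤ C₀) (hβ : (2 : ℝ) ^ n < βd)
    (hρ : 1 < ρ) :
    ∃ C₅ C₆ : ℝ, 0 < C₅ ∧ 0 < C₆ ∧
      ∀ μ : Measure (Euc d), GrowthBound μ n C₀ → SmallDoublingAE μ βd →
      ∀ (f : Euc d → ℝ) (t : ℝ), AEMeasurable f μ → 0 ≤ t →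
      ∀ fQ : CubeOf μ → ℝ,
        (∀ Q : CubeOf μ, ∫⁻ x in Q.set, ENNReal.ofReal |f x - fQ Q| ∂μ ≤
          ENNReal.ofReal (CC * t) * μ (Q.dil 2)) →
        (∀ Q R : CubeOf μ, Q.set ⊆ R.set → |fQ Q - fQ R| ≤ CC * Kcoef n Q R * t) →
      ∀ (Q : CubeOf μ) (lam : ℝ), 0 < lam →
        μ {x | x ∈ Q.set ∧ lam < |f x - fQ Q|} ≤
          ENNReal.ofReal (C₅ * Real.exp (-(C₆ * lam) / t)) * μ (Q.dil ρ) := by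
  obtain ⟨A, hA, hdecay⟩ := StarStarBoundWith.exists_measure_oscSet_le_exp d n
    (mul_nonneg hC₀ (by positivity : (0 : ℝ) ≤ (d + 1) ^ n)) hβ hρ
  have hC : 0 < max CC 1 := lt_max_of_lt_right one_pos
  refine ⟨2, A / max CC 1, two_pos, div_pos hA hC, ?_⟩
  intro μ hg hsd f t hf ht fQ hosc hdiff Q lam hlam
  rcases ht.eq_or_lt with rfl | ht
  · calc μ {x | x ∈ Q.set ∧ lam < |f x - fQ Q|} ≤ 1 * μ (Q.dil ρ) := by
          rw [one_mul]
          exact measure_mono fun x hx => Q.set_subset_dil hρ.le hx.1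
      _ ≤ ENNReal.ofReal (2 * Real.exp (-(A / max CC 1 * lam) / 0)) * μ (Q.dil ρ) := by
          gcongr
          simp
  have := hg.isLocallyFiniteMeasure
  have hCt : CC * t ≤ max CC 1 * t := mul_le_mul_of_nonneg_right (le_max_left _ _) ht.le
  have h : StarStarBoundWith μ n 2 f fQ (ENNReal.ofReal (max CC 1 * t)) := by
    refine ⟨fun Q => (hosc Q).trans (by gcongr), fun P R hPR => ?_⟩
    rw [← ENNReal.ofReal_mul (by positivity)]
    refine ENNReal.ofReal_le_ofReal ((hdiff P R hPR).trans ?_)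
    rw [mul_right_comm]
    exact mul_le_mul_of_nonneg_right hCt (Kcoef_nonneg P R)
  have hexp : -(A / max CC 1 * lam) / t = -(A * (lam / (max CC 1 * t))) := by
    field_simp
  rw [hexp]
  exact hdecay (GrowthBound.density_le hC₀ hg) hsd hf (mul_pos hC ht) h Q hlam.le

/-- Theorem 3.1 (John–Nirenberg inequality for `RBMO(μ)`). -/
theorem statement5 (d n : ℕ) (hn : 1 ≤ n) (hnd : n ≤ d) (C₀ βd ρ CC : ℝ)
    (hC₀ : 0 < C₀) (hβ : (2 : ℝ) ^ n < βd) (hρ : 1 < ρ) :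
    ∃ C₅ C₆ : ℝ, 0 < C₅ ∧ 0 < C₆ ∧
      ∀ μ : MeasureTheory.Measure (Euc d), GrowthBound μ n C₀ → SmallDoublingAE μ βd →
      ∀ (f : Euc d → ℝ) (t : ℝ), MeasureTheory.LocallyIntegrable f μ → 0 ≤ t →
        rbmoNorm μ n βd f = ENNReal.ofReal t →
      ∀ fQ : CubeOf μ → ℝ,
        (∀ Q : CubeOf μ, ∫⁻ x in Q.set, ENNReal.ofReal |f x - fQ Q| ∂μ ≤
          ENNReal.ofReal (CC * t) * μ (Q.dil 2)) →
        (∀ Q R : CubeOf μ, Q.set ⊆ R.set → |fQ Q - fQ R| ≤ CC * Kcoef n Q R * t) →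
      ∀ (Q : CubeOf μ) (lam : ℝ), 0 < lam →
        μ {x | x ∈ Q.set ∧ lam < |f x - fQ Q|} ≤
          ENNReal.ofReal (C₅ * Real.exp (-(C₆ * lam) / t)) * μ (Q.dil ρ) := by
  obtain ⟨C₅, C₆, h₅, h₆, key⟩ := statement5_general d n C₀ βd ρ CC hC₀.le hβ hρ
  exact ⟨C₅, C₆, h₅, h₆, fun μ hg hsd f t hf ht _ =>
    key μ hg hsd f t hf.aestronglyMeasurable.aemeasurable ht⟩
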